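/- arXiv:2512.06587 — 2 statements merged into one kernel-verified Lean document; each statement's English description precedes it below -/
import Mathlib

section
/- For every integer l ≥ 6, with τ = ⌊l/3⌋, the smallest second-order finite difference of g_l exceeds the largest second-order finite difference of h_l: Δ²g_l(1) > Δ²h_l(τ−1), where Δ²g_l(1) = g_l(2) − 2·g_l(1) + g_l(0) and Δ²h_l(τ−1) = h_l(τ) − 2·h_l(τ−1) + h_l(τ−2). -/
/-- `h_l(j) = (l+j)/(l-j)` as a rational number. -/
def hFn (l j : ℕ) : ℚ := ((l : ℚ) + j) / ((l : ℚ) - j)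

/-- `g_l(j) = ((l+j)^(2j))² / ((l+3j)^(2j) · (l−j)^(2j))` as a rational number, where
`x^(m)` denotes the descending factorial `x(x−1)⋯(x−m+1)`. -/
def gFn (l j : ℕ) : ℚ :=
  ((Nat.descFactorial (l + j) (2 * j) : ℚ)) ^ 2 /
    ((Nat.descFactorial (l + 3 * j) (2 * j) : ℚ) * (Nat.descFactorial (l - j) (2 * j) : ℚ))

/-!
With `u = l(l+1)`, pairing the factors `l + 1 + i` and `l - i` of the descending factorials turns
`g_l(j)` into a product of `j` ratios `(u - i(i+1))² / ((u - (j+i)(j+i+1)) (u - (2j+i)(2j+i+1)))`.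
Keeping only the terms of first order in `1/u` gives `g_l(j) ≥ 1 + 8j³/u`, so `g_l(2) ≥ 1 + 64/u`,
while `g_l(1) ≤ 1 + 10/u`; hence `Δ²g_l(1) ≥ 44/u`. On the other side `Δ²h_l` is the second
difference of `2l/(l-j)`, which is at most `32/u` up to `j = l/2`.

The centred difference `Δ²f(j)` is the iterated forward difference at `j - 1`, so that no index is
truncated.
-/

open Finset
open scoped fwdDiff

theorem fwdDiff_iter_two {M G : Type*} [AddCommMonoid M] [AddCommGroup G] (h : M) (f : M → G)
    (x : M) : Δ_[h] ^[2] f x = f (x + h + h) - 2 • f (x + h) + f x := by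
  simp only [Function.iterate_succ, Function.iterate_zero, Function.comp_apply, id_eq, fwdDiff]
  abel

theorem one_add_sum_le_prod_one_add {ι R : Type*} [CommSemiring R] [PartialOrder R]
    [IsOrderedRing R] (s : Finset ι) {f : ι → R} (hf : ∀ i ∈ s, 0 ≤ f i) :
    1 + ∑ i ∈ s, f i ≤ ∏ i ∈ s, (1 + f i) := by
  classical
  induction s using Finset.induction_on with
  | empty => simp
  | insert a s ha ih =>
    rw [sum_insert ha, prod_insert ha]
    have ha0 : 0 ≤ f a := hf a (mem_insert_self a s)
    have hs : ∀ i ∈ s, 0 ≤ f i := fun i hi ↦ hf i (mem_insert_of_mem hi)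
    calc 1 + (f a + ∑ i ∈ s, f i)
        ≤ (1 + f a) * (1 + ∑ i ∈ s, f i) := by
          have hexpand : (1 + f a) * (1 + ∑ i ∈ s, f i) =
              1 + (f a + ∑ i ∈ s, f i) + f a * ∑ i ∈ s, f i := by ring
          exact hexpand ▸ le_add_of_nonneg_right (mul_nonneg ha0 (sum_nonneg hs))
      _ ≤ (1 + f a) * ∏ i ∈ s, (1 + f i) :=
        mul_le_mul_of_nonneg_left (ih hs) (add_nonneg zero_le_one ha0)

section LinearOrderedField

variable {K : Type*} [Field K] [LinearOrder K] [IsStrictOrderedRing K] {a b c u : K}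

theorem one_add_sub_div_le_sub_div_sub (ha : 0 ≤ a) (hab : a ≤ b) (hbu : b < u) :
    1 + (b - a) / u ≤ (u - a) / (u - b) := by
  have hub : 0 < u - b := sub_pos.2 hbu
  calc 1 + (b - a) / u ≤ 1 + (b - a) / (u - b) :=
        add_le_add_right
          (div_le_div_of_nonneg_left (sub_nonneg.2 hab) hub (sub_le_self u (ha.trans hab))) 1
    _ = (u - a) / (u - b) := by field_simp; ring

theorem one_add_div_le_sq_div_mul (ha : 0 ≤ a) (hab : a ≤ b) (hac : a ≤ c) (hbu : b < u)
    (hcu : c < u) : 1 + (b + c - 2 * a) / u ≤ (u - a) ^ 2 / ((u - b) * (u - c)) := by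
  have hu : 0 < u := by linarith
  have hb : 0 ≤ (b - a) / u := div_nonneg (sub_nonneg.2 hab) hu.le
  have hc : 0 ≤ (c - a) / u := div_nonneg (sub_nonneg.2 hac) hu.le
  calc 1 + (b + c - 2 * a) / u ≤ (1 + (b - a) / u) * (1 + (c - a) / u) := by
        have hsplit : (b + c - 2 * a) / u = (b - a) / u + (c - a) / u := by ring
        nlinarith [mul_nonneg hb hc]
    _ ≤ (u - a) / (u - b) * ((u - a) / (u - c)) := by
        gcongr
        · exact div_nonneg (by linarith) (by linarith)
        · exact one_add_sub_div_le_sub_div_sub ha hab hbu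
        · exact one_add_sub_div_le_sub_div_sub ha hac hcu
    _ = (u - a) ^ 2 / ((u - b) * (u - c)) := by rw [div_mul_div_comm, ← sq]

end LinearOrderedField

/-- The pronic number `n(n+1)`, as a rational: `u = pronic l` is the variable in which `g_l(j)`
becomes a rational function. -/
def pronic (n : ℕ) : ℚ := n * (n + 1)

theorem pronic_nonneg (n : ℕ) : 0 ≤ pronic n := by unfold pronic; positivity

theorem pronic_strictMono : StrictMono pronic := fun m n hmn ↦ by
  unfold pronic
  gcongr

theorem pronic_sub_pronic (m n : ℕ) : pronic m - pronic n = (m + n + 1) * (m - n) := by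
  unfold pronic
  ring

theorem cast_descFactorial_succ {R : Type*} [Ring R] (n k : ℕ) :
    (n.descFactorial (k + 1) : R) = n.descFactorial k * (n - k) := by
  rw [← descPochhammer_eval_eq_descFactorial, descPochhammer_succ_eval,
    descPochhammer_eval_eq_descFactorial]

theorem descFactorial_mul_descFactorial_eq_prod_pronic {l j : ℕ} (hj : j ≤ l) (k : ℕ) :
    ((l + j + k).descFactorial k * (l - j).descFactorial k : ℚ) =
      ∏ i ∈ range k, (pronic l - pronic (j + i)) := by
  induction k with
  | zero => simp
  | succ k ih =>
    rw [prod_range_succ, ← ih, pronic_sub_pronic, ← add_assoc, Nat.succ_descFactorial_succ,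
      cast_descFactorial_succ, Nat.cast_sub hj]
    push_cast
    ring

theorem gFn_eq_prod {l j : ℕ} (hj : j ≤ l) :
    gFn l j = ∏ i ∈ range j, (pronic l - pronic i) ^ 2 /
      ((pronic l - pronic (j + i)) * (pronic l - pronic (2 * j + i))) := by
  have hnum : ((l + j).descFactorial (2 * j) : ℚ) = ∏ i ∈ range j, (pronic l - pronic i) := by
    have hsplit := Nat.descFactorial_mul_descFactorial (n := l + j) (show j ≤ 2 * j by omega)
    rw [Nat.add_sub_cancel, two_mul, Nat.add_sub_cancel, ← two_mul] at hsplit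
    have hpair := descFactorial_mul_descFactorial_eq_prod_pronic (Nat.zero_le l) j
    simp only [add_zero, Nat.sub_zero, zero_add] at hpair
    rw [← hsplit, ← hpair, Nat.cast_mul, mul_comm]
  have hden : ((l + 3 * j).descFactorial (2 * j) * (l - j).descFactorial (2 * j) : ℚ) =
      (∏ i ∈ range j, (pronic l - pronic (j + i))) *
        ∏ i ∈ range j, (pronic l - pronic (2 * j + i)) := by
    rw [show l + 3 * j = l + j + 2 * j by ring,
      descFactorial_mul_descFactorial_eq_prod_pronic hj, two_mul, prod_range_add]
    simp only [add_assoc]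
  rw [gFn, hnum, hden, ← prod_pow, ← prod_mul_distrib, ← prod_div_distrib]

theorem sum_range_pronic_add_pronic_sub (j : ℕ) :
    ∑ i ∈ range j, (pronic (j + i) + pronic (2 * j + i) - 2 * pronic i) = 8 * j ^ 3 := by
  have hpartial (k : ℕ) :
      ∑ i ∈ range k, (pronic (j + i) + pronic (2 * j + i) - 2 * pronic i) =
        5 * k * j ^ 2 + 3 * k ^ 2 * j := by
    induction k with
    | zero => simp
    | succ k ih =>
      rw [sum_range_succ, ih]
      simp only [pronic]
      push_cast
      ring
  rw [hpartial]
  ring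

theorem one_add_div_pronic_le_gFn {l j : ℕ} (hj : 3 * j ≤ l) :
    1 + 8 * (j : ℚ) ^ 3 / pronic l ≤ gFn l j := by
  have hmono {m n : ℕ} (hmn : m ≤ n) : pronic m ≤ pronic n := pronic_strictMono.monotone hmn
  have hfactor : ∀ i ∈ range j,
      1 + (pronic (j + i) + pronic (2 * j + i) - 2 * pronic i) / pronic l ≤
        (pronic l - pronic i) ^ 2 /
          ((pronic l - pronic (j + i)) * (pronic l - pronic (2 * j + i))) := by
    intro i hi
    have hij : i < j := mem_range.1 hi
    exact one_add_div_le_sq_div_mul (pronic_nonneg i) (hmono (by omega)) (hmono (by omega))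
      (pronic_strictMono (by omega)) (pronic_strictMono (by omega))
  have hterm : ∀ i ∈ range j,
      0 ≤ (pronic (j + i) + pronic (2 * j + i) - 2 * pronic i) / pronic l := by
    intro i _
    have hi₁ : pronic i ≤ pronic (j + i) := hmono (by omega)
    have hi₂ : pronic i ≤ pronic (2 * j + i) := hmono (by omega)
    exact div_nonneg (by linarith) (pronic_nonneg l)
  rw [gFn_eq_prod (by omega), ← sum_range_pronic_add_pronic_sub, sum_div]
  exact (one_add_sum_le_prod_one_add _ hterm).trans
    (prod_le_prod (fun i hi ↦ add_nonneg zero_le_one (hterm i hi)) hfactor)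

theorem gFn_zero (l : ℕ) : gFn l 0 = 1 := by simp [gFn]

theorem gFn_one_le {l : ℕ} (hl : 6 ≤ l) : gFn l 1 ≤ 1 + 10 / pronic l := by
  have hu : 42 ≤ pronic l :=
    (by norm_num [pronic] : (42 : ℚ) = pronic 6).le.trans (pronic_strictMono.monotone hl)
  have hg : gFn l 1 = pronic l ^ 2 / ((pronic l - 2) * (pronic l - 6)) := by
    rw [gFn_eq_prod (by omega)]
    norm_num [pronic]
  generalize pronic l = u at hu hg
  rw [hg, div_le_iff₀ (mul_pos (by linarith) (by linarith)), one_add_div (by linarith),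
    div_mul_eq_mul_div, le_div_iff₀ (by linarith)]
  nlinarith

theorem div_pronic_le_fwdDiff_iter_two_gFn {l : ℕ} (hl : 6 ≤ l) :
    44 / pronic l ≤ Δ_[1] ^[2] (gFn l) 0 := by
  have h₂ : 1 + 64 / pronic l ≤ gFn l 2 := by
    convert one_add_div_pronic_le_gFn (j := 2) hl using 3
    norm_num
  have h₁ := gFn_one_le hl
  rw [fwdDiff_iter_two, gFn_zero, nsmul_eq_mul, Nat.cast_ofNat]
  calc 44 / pronic l = (1 + 64 / pronic l) - 2 * (1 + 10 / pronic l) + 1 := by ring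
    _ ≤ gFn l 2 - 2 * gFn l 1 + 1 := by gcongr

theorem fwdDiff_iter_two_hFn {l t : ℕ} (ht : t + 2 < l) :
    Δ_[1] ^[2] (hFn l) t = 4 * l / ((l - t) * (l - (t + 1)) * (l - (t + 2))) := by
  have ht' : (t : ℚ) + 2 < l := by exact_mod_cast ht
  have h₀ : (l : ℚ) - t ≠ 0 := by linarith
  have h₁ : (l : ℚ) - (t + 1) ≠ 0 := by linarith
  have h₂ : (l : ℚ) - (t + 2) ≠ 0 := by linarith
  rw [fwdDiff_iter_two, add_assoc, nsmul_eq_mul, Nat.cast_ofNat]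
  simp only [hFn]
  push_cast
  field_simp
  ring

theorem fwdDiff_iter_two_hFn_le {l t : ℕ} (ht : 2 * (t + 2) ≤ l) :
    Δ_[1] ^[2] (hFn l) t ≤ 32 / pronic l := by
  have hl' : (0 : ℚ) < l := by exact_mod_cast (by omega : 0 < l)
  have ht' : 2 * ((t : ℚ) + 2) ≤ l := by exact_mod_cast ht
  rw [fwdDiff_iter_two_hFn (by omega)]
  calc 4 * l / ((l - t) * (l - (t + 1)) * (l - (t + 2)) : ℚ)
      ≤ 4 * l / (l / 2 * ((l + 1) / 2) * (l / 2)) := by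
        have h₀ : (l : ℚ) / 2 ≤ l - t := by linarith
        have h₁ : ((l : ℚ) + 1) / 2 ≤ l - (t + 1) := by linarith
        have h₂ : (l : ℚ) / 2 ≤ l - (t + 2) := by linarith
        have h₀₁ := mul_le_mul h₀ h₁ (by positivity) ((half_pos hl').le.trans h₀)
        exact div_le_div_of_nonneg_left (by positivity) (by positivity)
          (mul_le_mul h₀₁ h₂ (by positivity) (le_trans (by positivity) h₀₁))
    _ = 32 / pronic l := by
        unfold pronic
        field_simp
        norm_num

theorem stmt5_general {l t : ℕ} (hl : 6 ≤ l) (ht : 2 * (t + 2) ≤ l) :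
    Δ_[1] ^[2] (hFn l) t < Δ_[1] ^[2] (gFn l) 0 := by
  have hu : 0 < pronic l := (pronic_nonneg 0).trans_lt (pronic_strictMono (by omega))
  calc Δ_[1] ^[2] (hFn l) t ≤ 32 / pronic l := fwdDiff_iter_two_hFn_le ht
    _ < 44 / pronic l := by gcongr; norm_num
    _ ≤ Δ_[1] ^[2] (gFn l) 0 := div_pronic_le_fwdDiff_iter_two_gFn hl

/-- For every integer `l ≥ 6`, with `τ = ⌊l/3⌋`:
`Δ²g_l(1) = g_l(2) − 2 g_l(1) + g_l(0) > h_l(τ) − 2 h_l(τ−1) + h_l(τ−2) = Δ²h_l(τ−1)`. -/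
theorem stmt5 (l : ℕ) (hl : 6 ≤ l) :
    hFn l (l / 3) - 2 * hFn l (l / 3 - 1) + hFn l (l / 3 - 2)
      < gFn l 2 - 2 * gFn l 1 + gFn l 0 := by
  obtain ⟨t, ht⟩ : ∃ t, l / 3 = t + 2 := ⟨l / 3 - 2, by omega⟩
  rw [ht]
  simpa [fwdDiff_iter_two] using stmt5_general hl (t := t) (by omega)
end

section
/- For every fixed integer a ≥ 3, both l ↦ g_l(a)/h_l(a) and l ↦ g_l(a+1)/h_l(a+1) are strictly decreasing in the integer variable l over the interval 4a² ≤ l ≤ 4(a+1)² − 1; that is, for integers l, l′ with 4a² ≤ l < l′ ≤ 4(a+1)² − 1, one has g_{l′}(a)/h_{l′}(a) < g_l(a)/h_l(a) and g_{l′}(a+1)/h_{l′}(a+1) < g_l(a+1)/h_l(a+1). -/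
/-! Passing from `l` to `m = l + 1` changes each descending factorial by a single quotient of
linear factors, so `g_l(j) / h_l(j)` is multiplied by
`(m + j)² (m - 3j) (m - 1 + j) / ((m - j)² (m + 3j) (m - 1 - j))`.
The denominator exceeds the numerator by `2j (8mj² - m² - 3j²)`, which is positive for
integers `3j < m < 8j²`. For `j = a` or `j = a + 1` with `a ≥ 3`, these include all `m` with
`4a² < m < 4(a + 1)²`. -/

lemma cast_succ_descFactorial {K : Type*} [Field K] [CharZero K] {n k : ℕ} (hk : k ≤ n) :
    ((n + 1).descFactorial k : K) = n.descFactorial k * ((n + 1) / (n + 1 - k)) := by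
  have hne : (n + 1 - k : K) ≠ 0 := by
    rw [sub_ne_zero]
    exact_mod_cast (Nat.lt_succ_of_le hk).ne'
  have hrec : (n + 1 - k : K) * (n + 1).descFactorial k = (n + 1) * n.descFactorial k := by
    have := congrArg (Nat.cast (R := K)) (Nat.succ_descFactorial n k)
    push_cast [Nat.cast_sub (hk.trans n.le_succ)] at this
    exact this
  field_simp
  linear_combination hrec

lemma gFn_pos {l j : ℕ} (hl : 3 * j ≤ l) : 0 < gFn l j := by
  have hpos {n : ℕ} (hn : 2 * j ≤ n) : (0 : ℚ) < n.descFactorial (2 * j) :=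
    Nat.cast_pos.2 (Nat.descFactorial_pos.2 hn)
  have hmid := hpos (n := l + j) (by omega)
  have hhigh := hpos (n := l + 3 * j) (by omega)
  have hlow := hpos (n := l - j) (by omega)
  unfold gFn
  positivity

lemma hFn_pos {l j : ℕ} (hl : j < l) : 0 < hFn l j := by
  have hadd : (0 : ℚ) < l + j := by exact_mod_cast Nat.add_pos_left (Nat.zero_lt_of_lt hl) j
  exact div_pos hadd (sub_pos.2 (Nat.cast_lt.2 hl))

lemma gFn_succ {l j : ℕ} (hl : 3 * j ≤ l) :
    gFn (l + 1) j = gFn l j *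
      (((l + 1 + j) ^ 3 * (l + 1 - 3 * j)) / ((l + 1 - j) ^ 3 * (l + 1 + 3 * j))) := by
  have hmid : ((l + 1 + j).descFactorial (2 * j) : ℚ) =
      (l + j).descFactorial (2 * j) * ((l + 1 + j) / (l + 1 - j)) := by
    rw [add_right_comm, cast_succ_descFactorial (by omega)]
    push_cast
    ring
  have hhigh : ((l + 1 + 3 * j).descFactorial (2 * j) : ℚ) =
      (l + 3 * j).descFactorial (2 * j) * ((l + 1 + 3 * j) / (l + 1 + j)) := by
    rw [add_right_comm, cast_succ_descFactorial (by omega)]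
    push_cast
    ring
  have hlow : ((l + 1 - j).descFactorial (2 * j) : ℚ) =
      (l - j).descFactorial (2 * j) * ((l + 1 - j) / (l + 1 - 3 * j)) := by
    rw [Nat.sub_add_comm (by omega), cast_succ_descFactorial (by omega)]
    push_cast [Nat.cast_sub (show j ≤ l by omega)]
    ring
  unfold gFn
  rw [hmid, hhigh, hlow]
  field_simp

lemma gFn_div_hFn_succ {l j : ℕ} (hl : 3 * j ≤ l) (hjl : j < l) :
    gFn (l + 1) j / hFn (l + 1) j = gFn l j / hFn l j *
      (((l + 1 + j) ^ 2 * (l + 1 - 3 * j) * (l + j)) /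
        ((l + 1 - j) ^ 2 * (l + 1 + 3 * j) * (l - j))) := by
  have hgap : (0 : ℚ) < l - j := sub_pos.2 (Nat.cast_lt.2 hjl)
  have hgap_succ : (l + 1 - j : ℚ) ≠ 0 := by linarith
  have hadd : (l + j : ℚ) ≠ 0 := by exact_mod_cast (show l + j ≠ 0 by omega)
  rw [gFn_succ hl, hFn, hFn]
  push_cast
  field_simp

lemma succ_ratio_num_lt_den {R : Type*} [CommRing R] [LinearOrder R] [IsStrictOrderedRing R]
    {m x : R} (hx : 0 < x) (h : m ^ 2 + 3 * x ^ 2 < 8 * m * x ^ 2) :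
    (m + x) ^ 2 * (m - 3 * x) * (m - 1 + x) < (m - x) ^ 2 * (m + 3 * x) * (m - 1 - x) := by
  have hdiff : (m - x) ^ 2 * (m + 3 * x) * (m - 1 - x) - (m + x) ^ 2 * (m - 3 * x) * (m - 1 + x) =
      2 * x * (8 * m * x ^ 2 - (m ^ 2 + 3 * x ^ 2)) := by ring
  rw [← sub_pos, hdiff]
  exact mul_pos (mul_pos two_pos hx) (sub_pos.2 h)

lemma gFn_div_hFn_succ_lt {l j : ℕ} (hl : 3 * j ≤ l) (hu : l + 1 < 8 * j ^ 2) :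
    gFn (l + 1) j / hFn (l + 1) j < gFn l j / hFn l j := by
  have hj : 0 < j := Nat.pos_of_ne_zero (by rintro rfl; simp at hu)
  have hjl : j < l := by omega
  have hquad : ((l : ℚ) + 1) ^ 2 + 3 * (j : ℚ) ^ 2 < 8 * (l + 1) * (j : ℚ) ^ 2 := by
    -- `m (8j² - m) ≥ 8j² - 1 > 3j²` for `1 ≤ m ≤ 8j² - 1`, where `m = l + 1`
    norm_cast
    nlinarith
  have hlt := succ_ratio_num_lt_den (Nat.cast_pos.2 hj) hquad
  have hgap : (0 : ℚ) < l - j := sub_pos.2 (Nat.cast_lt.2 hjl)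
  have hgap_succ : (0 : ℚ) < l + 1 - j := by linarith
  rw [add_sub_cancel_right] at hlt
  rw [gFn_div_hFn_succ hl hjl]
  refine mul_lt_of_lt_one_right (div_pos (gFn_pos hl) (hFn_pos hjl)) ?_
  exact (div_lt_one (by positivity)).2 hlt

/-- For `l < 3j` the factor `(l-j)^(2j)` vanishes, so that `gFn l j` is the junk value `0`. -/
theorem stmt13_general (j : ℕ) :
    StrictAntiOn (fun l ↦ gFn l j / hFn l j) (Set.Ico (3 * j) (8 * j ^ 2)) :=
  strictAntiOn_of_add_one_lt Set.ordConnected_Ico fun _ _ hl hl' ↦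
    gFn_div_hFn_succ_lt hl.1 hl'.2

/-- For every fixed integer `a ≥ 3`, both `l ↦ g_l(a)/h_l(a)` and `l ↦ g_l(a+1)/h_l(a+1)`
are strictly decreasing in `l` over `4a² ≤ l ≤ 4(a+1)² − 1`. -/
theorem stmt13 (a : ℕ) (ha : 3 ≤ a) (l l' : ℕ)
    (h1 : 4 * a ^ 2 ≤ l) (h2 : l < l') (h3 : l' ≤ 4 * (a + 1) ^ 2 - 1) :
    gFn l' a / hFn l' a < gFn l a / hFn l a ∧
    gFn l' (a + 1) / hFn l' (a + 1) < gFn l (a + 1) / hFn l (a + 1) := by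
  have hl'_lt : l' < 4 * (a + 1) ^ 2 := Nat.lt_of_le_sub_one (by positivity) h3
  constructor <;> refine stmt13_general _ ⟨?_, ?_⟩ ⟨?_, ?_⟩ h2 <;> nlinarith
end
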